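/- Two-sided explicit bound on the solution of the confidence-radius equation: let c̄ > e be a real constant and define α(t) = sqrt(2·log(c̄·t)/t) for real t ≥ 1. For any real θ > 0 with θ² ≤ 2·c̄/e², if t ≥ 1 is a real number satisfying α(t) = θ, then (2/θ²)·( log(2·c̄/θ²) + (1/4)·log(log(2·c̄/θ²)) ) ≤ t ≤ (2/θ²)·( log(2·c̄/θ²) + 4·log(log(2·c̄/θ²)) ). -/

import Mathlib

/-!
Put `s = log (c * t)` and `L = log (2 * c / θ ^ 2)`. Squaring `α(t) = θ` gives
`t = (2 / θ ^ 2) * s`, and taking logarithms turns this into the fixed-point equation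
`s = L + log s`. As `s ≥ 1`, this forces `s ≥ L`, hence `s ≥ L + log L`. Conversely
`log s ≤ s / 2` gives `s ≤ 2 * L ≤ L ^ 2` as soon as `L ≥ 2`, hence `s ≤ L + 2 * log L`.
-/

open Real

theorem log_le_half {x : ℝ} (hx : 0 < x) : log x ≤ x / 2 := by
  have hlog_half : log (x / 2) ≤ x / 2 - 1 := log_le_sub_one_of_pos (by positivity)
  have hlog_two : log 2 ≤ 2 - 1 := log_le_sub_one_of_pos two_pos
  rw [log_div hx.ne' two_ne_zero] at hlog_half
  linarith

section FixedPoint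

variable {L s : ℝ}

theorem add_log_le_of_eq_add_log (hs : 1 ≤ s) (h : s = L + log s) : L + log L ≤ s := by
  have hL_pos : 0 < L := by linarith [log_le_sub_one_of_pos (zero_lt_one.trans_le hs)]
  have hL_le : L ≤ s := by linarith [log_nonneg hs]
  linarith [log_le_log hL_pos hL_le]

theorem le_add_two_mul_log_of_eq_add_log (hL : 2 ≤ L) (hs : 0 < s) (h : s = L + log s) :
    s ≤ L + 2 * log L := by
  have hs_le : s ≤ L ^ 2 :=
    calc s ≤ 2 * L := by linarith [log_le_half hs]
      _ ≤ L ^ 2 := by nlinarith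
  calc s = L + log s := h
    _ ≤ L + log (L ^ 2) := by gcongr
    _ = L + 2 * log L := by rw [log_pow, Nat.cast_ofNat]

end FixedPoint

/-- The confidence radius `α(t) = √(2 log(c t) / t)`, meant for `c > 0` and `t > 0` with `c t ≥ 1`;
where the radicand is negative or `t = 0`, its value is `0`. -/
noncomputable def confidenceRadius (c t : ℝ) : ℝ := √(2 * log (c * t) / t)

theorem two_le_log_two_mul_div_sq {c θ : ℝ} (hθ : 0 < θ) (hθc : θ ^ 2 ≤ 2 * c / exp 1 ^ 2) :
    2 ≤ log (2 * c / θ ^ 2) := by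
  have hexp : exp 2 ≤ 2 * c / θ ^ 2 :=
    calc exp 2 = exp 1 ^ 2 := by rw [← exp_nat_mul, Nat.cast_ofNat, mul_one]
      _ ≤ 2 * c / θ ^ 2 := (le_div_comm₀ (by positivity) (by positivity)).1 hθc
  exact (le_log_iff_exp_le ((exp_pos 2).trans_le hexp)).2 hexp

section ConfidenceRadius

variable {c θ t : ℝ}

theorem eq_two_div_sq_mul_log_of_confidenceRadius_eq (hθ : 0 < θ)
    (hα : confidenceRadius c t = θ) : t = 2 / θ ^ 2 * log (c * t) := by
  have hrad : 0 < 2 * log (c * t) / t := sqrt_pos.1 (hθ.trans_eq hα.symm)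
  have hsq : θ ^ 2 = 2 * log (c * t) / t := by
    rw [← hα, confidenceRadius, sq_sqrt hrad.le]
  have ht : t ≠ 0 := fun ht => hrad.ne' (by rw [ht, div_zero])
  rw [eq_div_iff ht] at hsq
  rw [div_mul_eq_mul_div, ← hsq, mul_div_cancel_left₀ _ (by positivity)]

theorem log_mul_eq_add_log_log_of_confidenceRadius_eq (hθ : 0 < θ)
    (hα : confidenceRadius c t = θ) :
    log (c * t) = log (2 * c / θ ^ 2) + log (log (c * t)) := by
  have hlog : log (c * t) ≠ 0 := fun hlog => hθ.ne <| by
    rw [← hα, confidenceRadius, hlog, mul_zero, zero_div, sqrt_zero]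
  have hc : c ≠ 0 := fun hc => hlog (by rw [hc, zero_mul, log_zero])
  rw [← log_mul (by positivity) hlog]
  congr 1
  calc c * t = c * (2 / θ ^ 2 * log (c * t)) := by
        rw [← eq_two_div_sq_mul_log_of_confidenceRadius_eq hθ hα]
    _ = 2 * c / θ ^ 2 * log (c * t) := by ring

theorem two_div_sq_mul_le_of_confidenceRadius_eq (hθ : 0 < θ) (hct : exp 1 ≤ c * t)
    (hα : confidenceRadius c t = θ) :
    2 / θ ^ 2 * (log (2 * c / θ ^ 2) + log (log (2 * c / θ ^ 2))) ≤ t := by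
  have hlog : 1 ≤ log (c * t) := (le_log_iff_exp_le ((exp_pos 1).trans_le hct)).2 hct
  calc 2 / θ ^ 2 * (log (2 * c / θ ^ 2) + log (log (2 * c / θ ^ 2)))
      ≤ 2 / θ ^ 2 * log (c * t) := by
        gcongr
        exact add_log_le_of_eq_add_log hlog
          (log_mul_eq_add_log_log_of_confidenceRadius_eq hθ hα)
    _ = t := (eq_two_div_sq_mul_log_of_confidenceRadius_eq hθ hα).symm

theorem le_two_div_sq_mul_of_confidenceRadius_eq (hθ : 0 < θ)
    (hθc : θ ^ 2 ≤ 2 * c / exp 1 ^ 2) (ht : 0 < t) (hα : confidenceRadius c t = θ) :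
    t ≤ 2 / θ ^ 2 * (log (2 * c / θ ^ 2) + 2 * log (log (2 * c / θ ^ 2))) := by
  have ht_eq := eq_two_div_sq_mul_log_of_confidenceRadius_eq hθ hα
  have hlog : 0 < log (c * t) := pos_of_mul_pos_right (ht_eq ▸ ht) (by positivity)
  calc t = 2 / θ ^ 2 * log (c * t) := ht_eq
    _ ≤ 2 / θ ^ 2 * (log (2 * c / θ ^ 2) + 2 * log (log (2 * c / θ ^ 2))) := by
        gcongr
        exact le_add_two_mul_log_of_eq_add_log (two_le_log_two_mul_div_sq hθ hθc) hlog
          (log_mul_eq_add_log_log_of_confidenceRadius_eq hθ hα)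

end ConfidenceRadius

theorem two_sided_solution_bound_general {c θ t : ℝ} (hθ : 0 < θ)
    (hθc : θ ^ 2 ≤ 2 * c / exp 1 ^ 2) (hct : exp 1 ≤ c * t) (hα : confidenceRadius c t = θ) :
    2 / θ ^ 2 * (log (2 * c / θ ^ 2) + log (log (2 * c / θ ^ 2))) ≤ t ∧
      t ≤ 2 / θ ^ 2 * (log (2 * c / θ ^ 2) + 2 * log (log (2 * c / θ ^ 2))) := by
  have hL := two_le_log_two_mul_div_sq hθ hθc
  have hlower := two_div_sq_mul_le_of_confidenceRadius_eq hθ hct hα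
  have ht : 0 < t := lt_of_lt_of_le
    (mul_pos (by positivity) (by linarith [log_nonneg (one_le_two.trans hL)])) hlower
  exact ⟨hlower, le_two_div_sq_mul_of_confidenceRadius_eq hθ hθc ht hα⟩

/-- Two-sided explicit bound on the solution of the confidence-radius equation: with
`α(t) = sqrt(2 log(c̄ t) / t)`, `c̄ > e`, `θ > 0`, `θ² ≤ 2c̄/e²`, if `t ≥ 1` satisfies
`α(t) = θ`, then
`(2/θ²)(log(2c̄/θ²) + (1/4) log log(2c̄/θ²)) ≤ t ≤ (2/θ²)(log(2c̄/θ²) + 4 log log(2c̄/θ²))`. -/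
theorem two_sided_solution_bound (cbar θ t : ℝ)
    (hc : Real.exp 1 < cbar) (hθ : 0 < θ)
    (hθ2 : θ ^ 2 ≤ 2 * cbar / Real.exp 1 ^ 2)
    (ht : 1 ≤ t)
    (hα : Real.sqrt (2 * Real.log (cbar * t) / t) = θ) :
    2 / θ ^ 2 * (Real.log (2 * cbar / θ ^ 2)
        + 1 / 4 * Real.log (Real.log (2 * cbar / θ ^ 2))) ≤ t ∧
      t ≤ 2 / θ ^ 2 * (Real.log (2 * cbar / θ ^ 2)
        + 4 * Real.log (Real.log (2 * cbar / θ ^ 2))) := by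
  have hloglog : 0 ≤ log (log (2 * cbar / θ ^ 2)) :=
    log_nonneg (one_le_two.trans (two_le_log_two_mul_div_sq hθ hθ2))
  have hct : exp 1 ≤ cbar * t :=
    hc.le.trans (le_mul_of_one_le_right ((exp_pos 1).trans hc).le ht)
  obtain ⟨hlower, hupper⟩ := two_sided_solution_bound_general hθ hθ2 hct hα
  exact ⟨le_trans (by gcongr; linarith) hlower, hupper.trans (by gcongr; norm_num)⟩
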